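/- Let k ≥ 2 be an integer, let 0 < ξ ≤ 1 be a constant, let G be a ξ-expanding k-graph on n vertices with average vertex degree d = d(G), and let j ∈ ℕ. If n^{1/(2j)} ≤ d ≤ (nk)^{1/(2j)}, then, setting β = max(⌈(n/d^{2j}) · log n⌉, ⌈(k/d^j) · log n⌉), the cop number of G satisfies c(G) ≤ 20 · ξ^{-2} · (d^j/k) · β. -/

import Mathlib

open scoped BigOperators

/-- A `k`-uniform hypergraph on vertex set `Fin n`. -/
structure KGraph (n k : ℕ) where
  edges : Finset (Finset (Fin n))
  uniform : ∀ e ∈ edges, e.card = k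

namespace KGraph

variable {n k : ℕ}

/-- A loose path of edges from `x` to `y`: a nonempty list of edges, the first containing `x`,
the last containing `y`, with consecutive edges intersecting. -/
def IsLoosePath (G : KGraph n k) (x y : Fin n) (l : List (Finset (Fin n))) : Prop :=
  l ≠ [] ∧ (∀ e ∈ l, e ∈ G.edges) ∧ (∀ e ∈ l.head?, x ∈ e) ∧
    (∀ e ∈ l.getLast?, y ∈ e) ∧ l.Chain' (fun e f => (e ∩ f).Nonempty)

/-- Distance between two vertices: the smallest length of a loose path between them
(`0` if they are equal, `⊤` if there is no such path). -/
noncomputable def dist (G : KGraph n k) (x y : Fin n) : ℕ∞ :=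
  if x = y then 0
  else sInf ((fun l : List (Finset (Fin n)) => (l.length : ℕ∞)) '' {l | G.IsLoosePath x y l})

/-- Distance between two sets of vertices: the minimum over pairs. -/
noncomputable def setDist (G : KGraph n k) (A B : Set (Fin n)) : ℕ∞ :=
  ⨅ (x ∈ A) (y ∈ B), G.dist x y

/-- The closed `r`-th vertex-neighbourhood of a set of vertices. -/
noncomputable def vNhd (G : KGraph n k) (A : Set (Fin n)) (r : ℕ) : Set (Fin n) :=
  {v | G.setDist A {v} ≤ (r : ℕ∞)}

/-- The set of vertices covered by a set of edges. -/
def VB (B : Set (Finset (Fin n))) : Set (Fin n) :=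
  ⋃ e ∈ B, (e : Set (Fin n))

/-- The closed `r`-th vertex-neighbourhood of a set of edges. -/
noncomputable def vNhdE (G : KGraph n k) (B : Set (Finset (Fin n))) (r : ℕ) : Set (Fin n) :=
  G.vNhd (VB B) r

/-- The closed `r`-th edge-neighbourhood of a set of vertices: edges within distance `r - 1`. -/
noncomputable def eNhd (G : KGraph n k) (A : Set (Fin n)) (r : ℕ) : Set (Finset (Fin n)) :=
  {e | e ∈ G.edges ∧ G.setDist (e : Set (Fin n)) A ≤ ((r - 1 : ℕ) : ℕ∞)}

/-- The average vertex degree of `G`. -/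
noncomputable def avgDeg (G : KGraph n k) : ℝ :=
  (∑ v : Fin n, ((G.vNhd {v} 1).ncard : ℝ)) / n

/-- A `k`-graph on `n` vertices with average vertex degree `d ≥ k` is `ξ`-expanding if
(A.1) edge-neighbourhoods of vertices are not too large, (A.2) vertex-neighbourhoods of vertex
sets have size comparable to `|A| d^r`, and (A.3) vertex-neighbourhoods of edge sets are large. -/
def IsExpanding (G : KGraph n k) (ξ : ℝ) : Prop :=
  (k : ℝ) ≤ G.avgDeg ∧
  (∀ v : Fin n, ∀ r : ℕ, 1 ≤ r → G.avgDeg ^ r ≤ Real.sqrt ((n : ℝ) * k) →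
    ((G.eNhd {v} r).ncard : ℝ) ≤ ξ⁻¹ * G.avgDeg ^ r / k) ∧
  (∀ A : Set (Fin n), ∀ r : ℕ, 1 ≤ r →
    ξ * min ((A.ncard : ℝ) * G.avgDeg ^ r) (n : ℝ) ≤ ((G.vNhd A r).ncard : ℝ) ∧
    ((G.vNhd A r).ncard : ℝ) ≤ ξ⁻¹ * (A.ncard : ℝ) * G.avgDeg ^ r) ∧
  (∀ B : Set (Finset (Fin n)), B ⊆ (G.edges : Set (Finset (Fin n))) → ∀ r : ℕ, 1 ≤ r →
    ξ * min ((B.ncard : ℝ) * k * G.avgDeg ^ r) (n : ℝ) ≤ ((G.vNhdE B r).ncard : ℝ))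

/-- `CopsWin G c r` : with the cops currently on the vertices `c i`, the robber on `r`, and the
cops to move, the cops have a strategy to catch the robber. Either a cop is already on the
robber's vertex; or the cops can move (each by distance at most 1) so that a cop lands on the
robber; or the cops can move so that whatever the robber's reply, the cops still win. -/
inductive CopsWin (G : KGraph n k) {m : ℕ} : (Fin m → Fin n) → Fin n → Prop
  | caught (c : Fin m → Fin n) (r : Fin n) (i : Fin m) (h : c i = r) : CopsWin G c r
  | stepCaught (c c' : Fin m → Fin n) (r : Fin n)
      (hmove : ∀ i, G.dist (c i) (c' i) ≤ 1) (i : Fin m) (h : c' i = r) : CopsWin G c r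
  | step (c c' : Fin m → Fin n) (r : Fin n)
      (hmove : ∀ i, G.dist (c i) (c' i) ≤ 1)
      (h : ∀ r' : Fin n, G.dist r r' ≤ 1 → CopsWin G c' r') : CopsWin G c r

/-- The cop number of `G` : the least `m` such that `m` cops can be initially placed so as to
catch the robber wherever he starts. -/
noncomputable def copNumber (G : KGraph n k) : ℕ :=
  sInf {m : ℕ | ∃ c₀ : Fin m → Fin n, ∀ r₀ : Fin n, CopsWin G c₀ r₀}

/-- `G` is connected if all pairs of vertices are at finite distance. -/
def Connected (G : KGraph n k) : Prop := ∀ x y : Fin n, G.dist x y ≠ ⊤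

end KGraph

open Classical in
/-- The probability that the binomial random `k`-uniform hypergraph `G^k(n,p)` (each `k`-subset
of `[n]` an edge independently with probability `p`) satisfies the property `Q`. -/
noncomputable def ghProb (n k : ℕ) (p : ℝ) (Q : KGraph n k → Prop) : ℝ :=
  ∑ E ∈ (Finset.powersetCard k (Finset.univ : Finset (Fin n))).powerset,
    if h : ∀ e ∈ E, e.card = k then
      (if Q ⟨E, h⟩ then
        p ^ E.card * (1 - p) ^ ((Finset.powersetCard k (Finset.univ : Finset (Fin n))).card - E.card)
      else 0)
    else 0

/-!
Place `m` cops independently and uniformly at random. By Chernoff's inequality and a union bound,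
expansion makes the following happen with positive probability: for every vertex `v`, every set `B`
of edges within distance `j - 1` of `v` has at least `|B|` cops within distance `j`. By Hall's
theorem the edges around the robber's starting vertex `v` can then be assigned to distinct cops,
each within distance `j` of its edge. The cops walk to their edges in `j` moves; by then the robber
is still on one of these edges, and the cop guarding it catches him on the next move.
-/

open scoped Finset

section RandomPlacement

variable {ι α : Type*} [Fintype ι] [Fintype α] [DecidableEq α]

lemma sum_pow_card_filter_mem [DecidableEq ι] {R : Type*} [CommSemiring R] (S : Finset α) (z : R) :
    ∑ c : ι → α, z ^ #{i | c i ∈ S} = (#S * z + #Sᶜ) ^ Fintype.card ι := by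
  have hprod (c : ι → α) : z ^ #{i | c i ∈ S} = ∏ i, if c i ∈ S then z else 1 := by
    simp [Finset.prod_ite]
  have hsum : ∑ x : α, (if x ∈ S then z else 1) = #S * z + #Sᶜ := by
    rw [← Finset.sum_add_sum_compl S, Finset.sum_congr rfl fun x hx => if_pos hx,
      Finset.sum_congr rfl fun x hx => if_neg (Finset.mem_compl.1 hx)]
    simp
  simp_rw [hprod, ← hsum, ← Finset.card_univ (α := ι), ← Finset.prod_const, Finset.prod_univ_sum,
    Fintype.piFinset_univ]

lemma card_mul_add_card_compl_le_exp [Nonempty α] (S : Finset α) (z : ℝ) :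
    #S * z + #Sᶜ ≤ Fintype.card α * Real.exp (-((1 - z) * (#S / Fintype.card α))) := by
  have hcompl : (#Sᶜ : ℝ) = Fintype.card α - #S := by
    rw [Finset.card_compl, Nat.cast_sub (Finset.card_le_univ S)]
  calc #S * z + #Sᶜ = Fintype.card α * (-((1 - z) * (#S / Fintype.card α)) + 1) := by
        rw [hcompl]; field_simp; ring
    _ ≤ _ := by gcongr; exact Real.add_one_le_exp _

/-- The Chernoff lower-tail bound, written as a count of functions. -/
lemma card_filter_card_filter_mem_lt_le [DecidableEq ι] [Nonempty α] (S : Finset α) (b : ℕ)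
    {z : ℝ} (hz0 : 0 < z) (hz1 : z ≤ 1) :
    (#{c : ι → α | #{i | c i ∈ S} < b} : ℝ) ≤
      z⁻¹ ^ b * Real.exp (-((1 - z) * (Fintype.card ι * #S / Fintype.card α))) *
        Fintype.card α ^ Fintype.card ι := by
  have markov : #{c : ι → α | #{i | c i ∈ S} < b} * z ^ b ≤ ∑ c : ι → α, z ^ #{i | c i ∈ S} := by
    rw [← nsmul_eq_mul]
    refine (Finset.card_nsmul_le_sum _ _ _ fun c hc => ?_).trans
      (Finset.sum_le_sum_of_subset_of_nonneg (Finset.subset_univ _) fun c _ _ => by positivity)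
    exact pow_le_pow_of_le_one hz0.le hz1 (Finset.mem_filter.1 hc).2.le
  have genFun : ∑ c : ι → α, z ^ #{i | c i ∈ S} ≤
      (Fintype.card α * Real.exp (-((1 - z) * (#S / Fintype.card α)))) ^ Fintype.card ι := by
    rw [sum_pow_card_filter_mem]
    gcongr
    exact card_mul_add_card_compl_le_exp S z
  rw [mul_assoc, inv_pow, ← div_eq_inv_mul, le_div_iff₀ (by positivity)]
  refine (markov.trans genFun).trans_eq ?_
  rw [mul_pow, ← Real.exp_nat_mul, mul_comm]
  congr 2
  ring

lemma exists_forall_le_card_filter_mem [Nonempty α] {κ : Type*} (T : Finset κ) (S : κ → Finset α)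
    (b : κ → ℕ)
    (h : ∑ t ∈ T, 2 ^ b t * Real.exp (-(Fintype.card ι * #(S t) / Fintype.card α / 2)) < 1) :
    ∃ c : ι → α, ∀ t ∈ T, b t ≤ #{i | c i ∈ S t} := by
  classical
  by_contra! hbad
  have hcover : Fintype.card (ι → α) ≤ ∑ t ∈ T, #{c : ι → α | #{i | c i ∈ S t} < b t} := by
    refine (Finset.card_le_card fun c _ => ?_).trans Finset.card_biUnion_le
    simpa using hbad c
  have hcount : (Fintype.card α : ℝ) ^ Fintype.card ι ≤
      (∑ t ∈ T, 2 ^ b t * Real.exp (-(Fintype.card ι * #(S t) / Fintype.card α / 2))) *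
        Fintype.card α ^ Fintype.card ι := by
    calc (Fintype.card α : ℝ) ^ Fintype.card ι
        ≤ ∑ t ∈ T, (#{c : ι → α | #{i | c i ∈ S t} < b t} : ℝ) := by
          rw [Fintype.card_fun] at hcover
          exact_mod_cast hcover
      _ ≤ _ := by
          rw [Finset.sum_mul]
          refine Finset.sum_le_sum fun t _ => ?_
          refine (card_filter_card_filter_mem_lt_le (S t) (b t) one_half_pos (by norm_num)).trans_eq
            ?_
          ring_nf
  have hpos : (0 : ℝ) < Fintype.card α ^ Fintype.card ι := by positivity
  exact (hcount.trans_lt (mul_lt_of_lt_one_left hpos h)).false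

end RandomPlacement

section TailEstimates

variable {n : ℕ}

lemma inv_natCast_pow_eq_exp (hn : n ≠ 0) (b : ℕ) :
    (n : ℝ)⁻¹ ^ b = Real.exp (-(b * Real.log n)) := by
  rw [Real.exp_neg, Real.exp_nat_mul, Real.exp_log (by positivity), inv_pow]

lemma two_pow_mul_exp_le_inv_pow {b : ℕ} {μ : ℝ} (hn : 2 ≤ n) (hb : 1 ≤ b)
    (hμ : 12 * (b * Real.log n) ≤ μ) :
    2 ^ b * Real.exp (-(μ / 2)) ≤ (n : ℝ)⁻¹ ^ 4 * (n : ℝ)⁻¹ ^ b := by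
  have htwo : (2 : ℝ) ^ b ≤ Real.exp (b * Real.log n) := by
    rw [Real.exp_nat_mul, Real.exp_log (by positivity)]
    gcongr
    exact_mod_cast hn
  have hlog : Real.log n ≤ b * Real.log n :=
    le_mul_of_one_le_left (Real.log_natCast_nonneg n) (by exact_mod_cast hb)
  calc 2 ^ b * Real.exp (-(μ / 2)) ≤ Real.exp (b * Real.log n) * Real.exp (-(μ / 2)) := by gcongr
    _ ≤ _ := by
      rw [← pow_add, inv_natCast_pow_eq_exp (by lia), ← Real.exp_add, Real.exp_le_exp]
      push_cast
      linarith

lemma two_pow_mul_exp_le_half_pow {b E : ℕ} {μ : ℝ} (hn : n ≠ 0) (hb : b ≤ E)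
    (hE : 12 * (E : ℝ) ≤ μ) (hlog : 12 * Real.log n ≤ μ) :
    2 ^ b * Real.exp (-(μ / 2)) ≤ (n : ℝ)⁻¹ ^ 4 * (1 / 2) ^ E := by
  have htwo : (2 : ℝ) ^ E ≤ Real.exp E := by
    rw [← Real.exp_one_pow]
    gcongr
    linarith [Real.exp_one_gt_d9]
  rw [one_div, inv_pow (2 : ℝ), ← div_eq_mul_inv, le_div_iff₀ (by positivity)]
  calc 2 ^ b * Real.exp (-(μ / 2)) * 2 ^ E ≤ Real.exp E * Real.exp (-(μ / 2)) * Real.exp E := by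
        gcongr
        exact (pow_le_pow_right₀ one_le_two hb).trans htwo
    _ ≤ _ := by
      rw [inv_natCast_pow_eq_exp hn, ← Real.exp_add, ← Real.exp_add, Real.exp_le_exp]
      push_cast
      linarith

lemma sum_powerset_inv_pow_add_half_pow_le {κ : Type*} (F : Finset κ) (hF : #F ≤ n) :
    ∑ B ∈ F.powerset, ((n : ℝ)⁻¹ ^ #B + (1 / 2) ^ #F) ≤ 4 := by
  have hinv : ∑ B ∈ F.powerset, (n : ℝ)⁻¹ ^ #B ≤ Real.exp 1 := by
    calc ∑ B ∈ F.powerset, (n : ℝ)⁻¹ ^ #B = ((n : ℝ)⁻¹ + 1) ^ #F := by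
          simpa using Finset.sum_pow_mul_eq_add_pow (n : ℝ)⁻¹ 1 F
      _ ≤ ((n : ℝ)⁻¹ + 1) ^ n := pow_le_pow_right₀ (le_add_of_nonneg_left (by positivity)) hF
      _ ≤ Real.exp (n : ℝ)⁻¹ ^ n := by gcongr; exact Real.add_one_le_exp _
      _ = Real.exp (n * (n : ℝ)⁻¹) := (Real.exp_nat_mul _ n).symm
      _ ≤ Real.exp 1 := Real.exp_le_exp.2 mul_inv_le_one
  have hhalf : ∑ _B ∈ F.powerset, ((1 : ℝ) / 2) ^ #F = 1 := by
    rw [Finset.sum_const, Finset.card_powerset, nsmul_eq_mul]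
    push_cast
    rw [← mul_pow]
    norm_num
  rw [Finset.sum_add_distrib, hhalf]
  linarith [Real.exp_one_lt_d9]

lemma two_pow_card_mul_exp_le {κ : Type*} {F B : Finset κ} {μ : ℝ} (hn : 2 ≤ n) (hBF : B ⊆ F)
    (hB : B.Nonempty) (h : 12 * (#B * Real.log n) ≤ μ ∨ 12 * (#F : ℝ) ≤ μ ∧ 12 * Real.log n ≤ μ) :
    2 ^ #B * Real.exp (-(μ / 2)) ≤ (n : ℝ)⁻¹ ^ 4 * ((n : ℝ)⁻¹ ^ #B + (1 / 2) ^ #F) := by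
  rw [mul_add]
  rcases h with h | ⟨hF, hlog⟩
  · exact (two_pow_mul_exp_le_inv_pow hn hB.card_pos h).trans
      (le_add_of_nonneg_right (by positivity))
  · exact (two_pow_mul_exp_le_half_pow (by lia) (Finset.card_le_card hBF) hF hlog).trans
      (le_add_of_nonneg_left (by positivity))

lemma sum_two_pow_mul_exp_lt {κ : Type*} {F : Finset κ} {μ : Finset κ → ℝ} (hn : 2 ≤ n)
    (hF : #F ≤ n)
    (h : ∀ B ⊆ F, 12 * (#B * Real.log n) ≤ μ B ∨ 12 * (#F : ℝ) ≤ μ B ∧ 12 * Real.log n ≤ μ B) :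
    ∑ B ∈ F.powerset with B.Nonempty, 2 ^ #B * Real.exp (-(μ B / 2)) < (n : ℝ)⁻¹ := by
  have hpow : (2 : ℝ) ^ 3 ≤ n ^ 3 := by gcongr; exact_mod_cast hn
  calc ∑ B ∈ F.powerset with B.Nonempty, 2 ^ #B * Real.exp (-(μ B / 2))
      ≤ ∑ B ∈ F.powerset with B.Nonempty,
          (n : ℝ)⁻¹ ^ 4 * ((n : ℝ)⁻¹ ^ #B + (1 / 2) ^ #F) := by
        refine Finset.sum_le_sum fun B hB => ?_
        rw [Finset.mem_filter, Finset.mem_powerset] at hB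
        exact two_pow_card_mul_exp_le hn hB.1 hB.2 (h B hB.1)
    _ ≤ ∑ B ∈ F.powerset, (n : ℝ)⁻¹ ^ 4 * ((n : ℝ)⁻¹ ^ #B + (1 / 2) ^ #F) :=
        Finset.sum_le_sum_of_subset_of_nonneg (Finset.filter_subset _ _) fun _ _ _ => by positivity
    _ ≤ (n : ℝ)⁻¹ ^ 4 * 4 := by
        rw [← Finset.mul_sum]
        gcongr
        exact sum_powerset_inv_pow_add_half_pow_le F hF
    _ = (n : ℝ)⁻¹ * (4 / n ^ 3) := by field_simp
    _ < (n : ℝ)⁻¹ :=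
        mul_lt_of_lt_one_right (by positivity) ((div_lt_one (by positivity)).2 (by linarith))

lemma pow_le_sqrt_of_le_rpow {x a : ℝ} {j : ℕ} (hx : 0 ≤ x) (ha : 0 ≤ a) (hj : j ≠ 0)
    (h : x ≤ a ^ ((1 : ℝ) / (2 * (j : ℝ)))) : x ^ j ≤ √a := by
  calc x ^ j ≤ (a ^ ((1 : ℝ) / (2 * (j : ℝ)))) ^ j := by gcongr
    _ = √a := by
      rw [← Real.rpow_mul_natCast ha, Real.sqrt_eq_rpow]
      congr 1
      field_simp

end TailEstimates

namespace KGraph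

variable {n k : ℕ} {G : KGraph n k}

section Distance

variable {x y z v : Fin n} {e f : Finset (Fin n)} {l : List (Finset (Fin n))} {r s : ℕ}

lemma isLoosePath_singleton : G.IsLoosePath x y [e] ↔ e ∈ G.edges ∧ x ∈ e ∧ y ∈ e := by
  simp [IsLoosePath, List.Chain']

lemma isLoosePath_cons_cons :
    G.IsLoosePath x y (e :: f :: l) ↔
      e ∈ G.edges ∧ x ∈ e ∧ ∃ z ∈ e, G.IsLoosePath z y (f :: l) := by
  simp only [IsLoosePath, List.Chain', List.isChain_cons_cons, Finset.Nonempty, Finset.mem_inter,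
    List.forall_mem_cons, List.head?_cons, Option.mem_some_iff, List.getLast?_cons_cons]
  grind

lemma IsLoosePath.reverse (h : G.IsLoosePath x y l) : G.IsLoosePath y x l.reverse := by
  obtain ⟨hne, hmem, hx, hy, hchain⟩ := h
  refine ⟨by simpa using hne, by simpa using hmem, by simpa using hy, by simpa using hx, ?_⟩
  refine List.isChain_reverse.2 (List.IsChain.imp (fun e f hef => ?_) hchain)
  rwa [Finset.inter_comm]

@[simp]
lemma dist_self (x : Fin n) : G.dist x x = 0 := if_pos rfl

lemma dist_le_iff : G.dist x y ≤ s ↔ x = y ∨ ∃ l, G.IsLoosePath x y l ∧ l.length ≤ s := by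
  rcases eq_or_ne x y with rfl | hne
  · simp
  rw [dist, if_neg hne]
  refine ⟨fun h => Or.inr ?_, ?_⟩
  · have hlt := h.trans_lt (ENat.natCast_lt_natCast.2 s.lt_succ_self)
    obtain ⟨_, ⟨l, hl, rfl⟩, hls⟩ := sInf_lt_iff.1 hlt
    exact ⟨l, hl, Nat.lt_succ_iff.1 (ENat.natCast_lt_natCast.1 hls)⟩
  · rintro (hxy | ⟨l, hl, hls⟩)
    · exact absurd hxy hne
    · exact sInf_le_of_le (Set.mem_image_of_mem _ hl) (ENat.natCast_le_natCast.2 hls)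

lemma dist_eq_zero : G.dist x y = 0 ↔ x = y := by
  rw [← nonpos_iff_eq_zero, ← Nat.cast_zero, dist_le_iff]
  simp +contextual [IsLoosePath]

lemma dist_le_of_dist_le (h : G.dist x y ≤ s) : G.dist y x ≤ s := by
  rw [dist_le_iff] at h ⊢
  exact h.imp Eq.symm fun ⟨l, hl, hs⟩ => ⟨l.reverse, hl.reverse, by simpa using hs⟩

lemma dist_le_succ_iff :
    G.dist x y ≤ (s + 1 : ℕ) ↔ x = y ∨ ∃ e ∈ G.edges, x ∈ e ∧ ∃ z ∈ e, G.dist z y ≤ s := by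
  simp only [dist_le_iff]
  refine or_congr_right ⟨?_, ?_⟩
  · rintro ⟨_ | ⟨e, _ | ⟨f, l⟩⟩, hl, hs⟩
    · exact absurd rfl hl.1
    · obtain ⟨he, hx, hy⟩ := isLoosePath_singleton.1 hl
      exact ⟨e, he, hx, y, hy, Or.inl rfl⟩
    · obtain ⟨he, hx, z, hz, hzy⟩ := isLoosePath_cons_cons.1 hl
      exact ⟨e, he, hx, z, hz, Or.inr ⟨f :: l, hzy, Nat.le_of_succ_le_succ hs⟩⟩
  · rintro ⟨e, he, hx, z, hz, rfl | ⟨_ | ⟨f, l⟩, hl, hs⟩⟩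
    · exact ⟨[e], isLoosePath_singleton.2 ⟨he, hx, hz⟩, by simp⟩
    · exact absurd rfl hl.1
    · exact ⟨e :: f :: l, isLoosePath_cons_cons.2 ⟨he, hx, z, hz, hl⟩, Nat.succ_le_succ hs⟩

lemma dist_le_one_iff : G.dist x y ≤ 1 ↔ x = y ∨ ∃ e ∈ G.edges, x ∈ e ∧ y ∈ e := by
  have h := dist_le_succ_iff (G := G) (x := x) (y := y) (s := 0)
  simpa [dist_eq_zero] using h

lemma dist_le_succ_iff_exists_dist_le :
    G.dist x y ≤ (s + 1 : ℕ) ↔ ∃ z, G.dist x z ≤ 1 ∧ G.dist z y ≤ s := by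
  constructor
  · intro h
    obtain rfl | ⟨e, he, hx, z, hz, hzy⟩ := dist_le_succ_iff.1 h
    · exact ⟨x, by simp⟩
    · exact ⟨z, dist_le_one_iff.2 (Or.inr ⟨e, he, hx, hz⟩), hzy⟩
  · rintro ⟨z, hxz, hzy⟩
    obtain rfl | ⟨e, he, hx, hz⟩ := dist_le_one_iff.1 hxz
    · exact hzy.trans (by exact_mod_cast s.le_succ)
    · exact dist_le_succ_iff.2 (Or.inr ⟨e, he, hx, z, hz, hzy⟩)

lemma setDist_le_iff {A B : Set (Fin n)} :
    G.setDist A B ≤ s ↔ ∃ x ∈ A, ∃ y ∈ B, G.dist x y ≤ s := by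
  constructor
  · intro h
    have hlt := h.trans_lt (ENat.natCast_lt_natCast.2 s.lt_succ_self)
    simp only [setDist, iInf_lt_iff] at hlt
    obtain ⟨x, hx, y, hy, hxy⟩ := hlt
    exact ⟨x, hx, y, hy, Order.le_of_lt_add_one (by exact_mod_cast hxy)⟩
  · rintro ⟨x, hx, y, hy, h⟩
    exact (iInf₂_le_of_le x hx (iInf₂_le y hy)).trans h

lemma mem_vNhd {A : Set (Fin n)} : v ∈ G.vNhd A r ↔ ∃ x ∈ A, G.dist x v ≤ r := by
  simp [vNhd, setDist_le_iff]

lemma mem_vNhdE {B : Set (Finset (Fin n))} :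
    v ∈ G.vNhdE B r ↔ ∃ e ∈ B, ∃ x ∈ e, G.dist x v ≤ r := by
  simp only [vNhdE, mem_vNhd, VB, Set.mem_iUnion₂, Finset.mem_coe]
  grind

lemma mem_eNhd_singleton_succ :
    e ∈ G.eNhd {v} (r + 1) ↔ e ∈ G.edges ∧ ∃ x ∈ e, G.dist x v ≤ r := by
  simp [eNhd, setDist_le_iff]

lemma exists_mem_eNhd_of_dist_le (hv : ∃ e ∈ G.edges, v ∈ e) (hr : 1 ≤ r)
    (h : G.dist v x ≤ r) : ∃ e ∈ G.eNhd {v} r, x ∈ e := by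
  obtain ⟨r, rfl⟩ := Nat.exists_eq_add_of_le' hr
  obtain rfl | ⟨e, he, hx, z, hz, hzv⟩ := dist_le_succ_iff.1 (dist_le_of_dist_le h)
  · obtain ⟨e, he, hxe⟩ := hv
    exact ⟨e, mem_eNhd_singleton_succ.2 ⟨he, x, hxe, by simp⟩, hxe⟩
  · exact ⟨e, mem_eNhd_singleton_succ.2 ⟨he, z, hz, hzv⟩, hx⟩

lemma vNhd_singleton_of_forall_notMem (hv : ∀ e ∈ G.edges, v ∉ e) : G.vNhd {v} r = {v} := by
  ext x
  simp only [mem_vNhd, Set.mem_singleton_iff, exists_eq_left]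
  refine ⟨fun h => ?_, fun h => by simp [h]⟩
  obtain rfl | ⟨e, he, hve, -⟩ := dist_le_succ_iff.1 (h.trans (by exact_mod_cast r.le_succ))
  · rfl
  · exact absurd hve (hv e he)

end Distance

section Game

variable {m j s : ℕ} {c t : Fin m → Fin n} {v : Fin n}

lemma copsWin_of_dist_targets_le (hc : ∀ i, G.dist (c i) (t i) ≤ s)
    (ht : ∀ x, G.dist v x ≤ s → ∃ i, G.dist (t i) x ≤ 1) : G.CopsWin c v := by
  induction s generalizing c v with
  | zero =>
    obtain rfl : c = t := funext fun i => dist_eq_zero.1 (nonpos_iff_eq_zero.1 (hc i))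
    obtain ⟨i, hi⟩ := ht v (by simp)
    refine .stepCaught c (Function.update c i v) v (fun i' => ?_) i (by simp)
    rcases eq_or_ne i' i with rfl | hne
    · simpa using hi
    · simp [hne]
  | succ s ih =>
    choose c' hcc' hc't using fun i => dist_le_succ_iff_exists_dist_le.1 (hc i)
    refine .step c c' v hcc' fun v' hv' => ih hc't fun x hx => ht x ?_
    exact dist_le_succ_iff_exists_dist_le.2 ⟨v', hv', hx⟩

open scoped Classical in
/-- Hall's condition for guarding the edges around `v`: every set of edges from the `j`-th
edge-neighbourhood of `v` has at least as many cops within distance `j`. It is what allows the cops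
at `c` to occupy all these edges in `j` moves. -/
def HallCondition (G : KGraph n k) (j : ℕ) (c : Fin m → Fin n) (v : Fin n) : Prop :=
  ∀ B : Finset (Finset (Fin n)), (B : Set (Finset (Fin n))) ⊆ G.eNhd {v} j →
    #B ≤ #{i | c i ∈ G.vNhdE B j}

lemma HallCondition.exists_injective (h : G.HallCondition j c v) :
    ∃ f : G.eNhd {v} j → Fin m, f.Injective ∧ ∀ e, ∃ x ∈ e.1, G.dist (c (f e)) x ≤ j := by
  classical
  obtain ⟨f, hf, hfe⟩ := (Finset.all_card_le_biUnion_card_iff_exists_injective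
    fun e : G.eNhd {v} j => {i | c i ∈ G.vNhdE {e.1} j}.toFinset).1 fun s => by
      have hs := h (s.map (Function.Embedding.subtype _)) (by simp)
      rw [Finset.card_map] at hs
      refine hs.trans (Finset.card_le_card fun i hi => ?_)
      simpa [mem_vNhdE] using hi
  refine ⟨f, hf, fun e => ?_⟩
  obtain ⟨x, hx, hxf⟩ : ∃ x ∈ e.1, G.dist x (c (f e)) ≤ j := by
    simpa [mem_vNhdE] using hfe e
  exact ⟨x, hx, dist_le_of_dist_le hxf⟩

lemma HallCondition.exists_targets (h : G.HallCondition j c v) :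
    ∃ t : Fin m → Fin n, (∀ i, G.dist (c i) (t i) ≤ j) ∧ ∀ e ∈ G.eNhd {v} j, ∃ i, t i ∈ e := by
  obtain ⟨f, hf, hdist⟩ := h.exists_injective
  choose g hge hgd using hdist
  refine ⟨Function.extend f g c, fun i => ?_, fun e he => ⟨f ⟨e, he⟩, ?_⟩⟩
  · by_cases hi : ∃ e, f e = i
    · obtain ⟨e, rfl⟩ := hi
      simpa [hf.extend_apply] using hgd e
    · simp [Function.extend_apply' _ _ _ hi]
  · simpa [hf.extend_apply] using hge ⟨e, he⟩

lemma HallCondition.copsWin (h : G.HallCondition j c v) (hj : 1 ≤ j)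
    (hv : ∃ e ∈ G.edges, v ∈ e) : G.CopsWin c v := by
  obtain ⟨t, hct, hte⟩ := h.exists_targets
  refine copsWin_of_dist_targets_le hct fun x hx => ?_
  obtain ⟨e, he, hxe⟩ := exists_mem_eNhd_of_dist_le hv hj hx
  obtain ⟨i, hi⟩ := hte e he
  exact ⟨i, dist_le_one_iff.2 (Or.inr ⟨e, he.1, hi, hxe⟩)⟩

lemma copNumber_le_of_forall_copsWin (h : ∀ v, G.CopsWin c v) : G.copNumber ≤ m :=
  Nat.sInf_le ⟨c, h⟩

lemma copNumber_le_card_vertices (G : KGraph n k) : G.copNumber ≤ n :=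
  copNumber_le_of_forall_copsWin (c := id) fun v => .caught _ _ v rfl

lemma avgDeg_le_card_vertices (G : KGraph n k) : G.avgDeg ≤ n := by
  refine div_le_of_le_mul₀ n.cast_nonneg n.cast_nonneg ?_
  refine (Finset.sum_le_card_nsmul _ _ (n : ℝ) fun v _ => ?_).trans_eq (by simp)
  exact_mod_cast (Set.ncard_le_card _).trans_eq (Nat.card_fin n)

end Game

lemma exists_hallCondition {m j : ℕ} (hn : 2 ≤ n) (hcard : ∀ v, (G.eNhd {v} j).ncard ≤ n)
    (h : ∀ (v : Fin n) (B : Finset (Finset (Fin n))), (B : Set (Finset (Fin n))) ⊆ G.eNhd {v} j →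
      12 * (#B * Real.log n) ≤ m * (G.vNhdE B j).ncard / n ∨
        12 * ((G.eNhd {v} j).ncard : ℝ) ≤ m * (G.vNhdE B j).ncard / n ∧
          12 * Real.log n ≤ m * (G.vNhdE B j).ncard / n) :
    ∃ c : Fin m → Fin n, ∀ v, G.HallCondition j c v := by
  classical
  have : Nonempty (Fin n) := ⟨0, by lia⟩
  simp only [Set.ncard_eq_toFinset_card'] at hcard h
  let F (v : Fin n) : Finset (Finset (Fin n)) := (G.eNhd {v} j).toFinset
  let T : Finset (Σ _ : Fin n, Finset (Finset (Fin n))) :=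
    Finset.univ.sigma fun v => {B ∈ (F v).powerset | B.Nonempty}
  have hsum : ∑ t ∈ T, 2 ^ #t.2 * Real.exp (-(m * #(G.vNhdE t.2 j).toFinset / n / 2)) < 1 := by
    rw [Finset.sum_sigma]
    refine (Finset.sum_lt_sum_of_nonempty Finset.univ_nonempty fun v _ =>
      sum_two_pow_mul_exp_lt hn (hcard v) fun B hB => h v B (by simpa [F] using hB)).trans_eq ?_
    simp [mul_inv_cancel₀ (by positivity : (n : ℝ) ≠ 0)]
  obtain ⟨c, hc⟩ := exists_forall_le_card_filter_mem (ι := Fin m) T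
    (fun t => (G.vNhdE t.2 j).toFinset) (fun t => #t.2) (by simpa using hsum)
  refine ⟨c, fun v B hB => ?_⟩
  rcases B.eq_empty_or_nonempty with rfl | hne
  · simp
  · simpa using hc ⟨v, B⟩ (by simp [T, F, hne, hB])

namespace IsExpanding

variable {ξ β : ℝ} {j m : ℕ}

lemma two_le_card_vertices (hG : G.IsExpanding ξ) (hk : 2 ≤ k) : 2 ≤ n :=
  hk.trans (by exact_mod_cast hG.1.trans G.avgDeg_le_card_vertices)

lemma exists_mem_edges (hG : G.IsExpanding ξ) (hd : 1 < G.avgDeg) (hξ : 1 < ξ * n) (v : Fin n) :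
    ∃ e ∈ G.edges, v ∈ e := by
  by_contra! hv
  obtain ⟨r, hr⟩ := pow_unbounded_of_one_lt (n : ℝ) hd
  have hnr : (n : ℝ) ≤ G.avgDeg ^ (r + 1) := hr.le.trans (pow_le_pow_right₀ hd.le r.le_succ)
  have hexp := (hG.2.2.1 {v} (r + 1) r.succ_pos).1
  rw [vNhd_singleton_of_forall_notMem hv, Set.ncard_singleton, Nat.cast_one, one_mul,
    min_eq_right hnr] at hexp
  exact hξ.not_ge hexp

lemma ncard_eNhd_le (hG : G.IsExpanding ξ) (hj : 1 ≤ j) (hd : G.avgDeg ^ j ≤ √(n * k))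
    (v : Fin n) : ((G.eNhd {v} j).ncard : ℝ) ≤ ξ⁻¹ * (G.avgDeg ^ j / k) :=
  (hG.2.1 v j hj hd).trans_eq (mul_div_assoc _ _ _)

/-- The right-hand side is the expected number of `m` random cops within distance `j` of `B`. -/
lemma mul_min_le_mul_ncard_vNhdE_div (hG : G.IsExpanding ξ) (hn : 0 < n) (hk : 0 < k)
    (hξ : 0 < ξ) (hj : 1 ≤ j) (hm : 12 * (ξ⁻¹ ^ 2 * (G.avgDeg ^ j / k) * β) ≤ m)
    {B : Finset (Finset (Fin n))} (hB : B ⊆ G.edges) :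
    12 * (ξ⁻¹ * (min (#B * (G.avgDeg ^ (2 * j) / n)) (G.avgDeg ^ j / k) * β)) ≤
      m * (G.vNhdE B j).ncard / n := by
  have hd0 : 0 ≤ G.avgDeg := k.cast_nonneg.trans hG.1
  have hexp := hG.2.2.2 B (by exact_mod_cast hB) j hj
  rw [Set.ncard_coe_finset] at hexp
  have hmin : min (#B * (G.avgDeg ^ (2 * j) / n)) (G.avgDeg ^ j / k) =
      G.avgDeg ^ j / k * min (#B * k * G.avgDeg ^ j) n / n := by
    rw [mul_min_of_nonneg _ _ (by positivity), ← min_div_div_right (by positivity)]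
    congr 1 <;> field_simp
    ring
  calc 12 * (ξ⁻¹ * (min (#B * (G.avgDeg ^ (2 * j) / n)) (G.avgDeg ^ j / k) * β))
      = 12 * (ξ⁻¹ ^ 2 * (G.avgDeg ^ j / k) * β) * (ξ * min (#B * k * G.avgDeg ^ j) n) / n := by
        rw [hmin]; field_simp
    _ ≤ m * (G.vNhdE B j).ncard / n := by gcongr

lemma log_le_or_ncard_eNhd_le (hG : G.IsExpanding ξ) (hn : 0 < n) (hk : 0 < k) (hξ0 : 0 < ξ)
    (hξ1 : ξ ≤ 1) (hj : 1 ≤ j) (hd : G.avgDeg ^ j ≤ √(n * k)) (hβ : 1 ≤ β)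
    (hβn : Real.log n ≤ G.avgDeg ^ (2 * j) / n * β) (hβk : Real.log n ≤ G.avgDeg ^ j / k * β)
    (hm : 12 * (ξ⁻¹ ^ 2 * (G.avgDeg ^ j / k) * β) ≤ m) (v : Fin n)
    {B : Finset (Finset (Fin n))} (hB : B ⊆ G.edges) :
    12 * (#B * Real.log n) ≤ m * (G.vNhdE B j).ncard / n ∨
      12 * ((G.eNhd {v} j).ncard : ℝ) ≤ m * (G.vNhdE B j).ncard / n ∧
        12 * Real.log n ≤ m * (G.vNhdE B j).ncard / n := by
  have hd0 : 0 ≤ G.avgDeg := k.cast_nonneg.trans hG.1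
  have hmean := hG.mul_min_le_mul_ncard_vNhdE_div hn hk hξ0 hj hm hB
  have hξ : 1 ≤ ξ⁻¹ := (one_le_inv₀ hξ0).2 hξ1
  rcases min_choice (#B * (G.avgDeg ^ (2 * j) / n)) (G.avgDeg ^ j / k) with h | h <;>
    rw [h] at hmean
  · left
    refine le_trans (mul_le_mul_of_nonneg_left ?_ (by norm_num)) hmean
    calc #B * Real.log n ≤ #B * (G.avgDeg ^ (2 * j) / n * β) := by gcongr
      _ = #B * (G.avgDeg ^ (2 * j) / n) * β := (mul_assoc _ _ _).symm
      _ ≤ _ := le_mul_of_one_le_left (by positivity) hξ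
  · refine Or.inr ⟨le_trans ?_ hmean, le_trans ?_ hmean⟩ <;> gcongr
    · exact (hG.ncard_eNhd_le hj hd v).trans
        (by gcongr; exact le_mul_of_one_le_right (by positivity) hβ)
    · exact hβk.trans (le_mul_of_one_le_left (by positivity) hξ)

theorem copNumber_le (hG : G.IsExpanding ξ) (hk : 2 ≤ k) (hξ0 : 0 < ξ) (hξ1 : ξ ≤ 1)
    (hj : 1 ≤ j) (hd : G.avgDeg ^ j ≤ √(n * k)) (hβ : 1 ≤ β)
    (hβn : n / G.avgDeg ^ (2 * j) * Real.log n ≤ β) (hβk : k / G.avgDeg ^ j * Real.log n ≤ β) :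
    (G.copNumber : ℝ) ≤ 13 * (ξ⁻¹ ^ 2 * (G.avgDeg ^ j / k) * β) := by
  have hn := hG.two_le_card_vertices hk
  have hd1 : 1 < G.avgDeg := (Nat.one_lt_cast.2 hk).trans_le hG.1
  have hξ : 1 ≤ ξ⁻¹ := (one_le_inv₀ hξ0).2 hξ1
  have hq : 1 ≤ G.avgDeg ^ j / k :=
    (one_le_div (by positivity)).2 (hG.1.trans (le_self_pow₀ hd1.le (by lia)))
  set M := ξ⁻¹ ^ 2 * (G.avgDeg ^ j / k) * β
  have hqM : ξ⁻¹ * (G.avgDeg ^ j / k) ≤ M := by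
    calc ξ⁻¹ * (G.avgDeg ^ j / k) ≤ ξ⁻¹ ^ 2 * (G.avgDeg ^ j / k) := by
          gcongr
          exact le_self_pow₀ hξ two_ne_zero
      _ ≤ M := le_mul_of_one_le_right (by positivity) hβ
  have hM1 : 1 ≤ M := (one_le_mul_of_one_le_of_one_le hξ hq).trans hqM
  rcases le_or_gt (n : ℝ) (13 * M) with hnM | hnM
  · exact (Nat.cast_le.2 G.copNumber_le_card_vertices).trans hnM
  have hξn : 1 < ξ * n := by
    rw [← inv_mul_lt_iff₀ hξ0, mul_one]
    linarith [le_mul_of_one_le_right (zero_le_one.trans hξ) hq]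
  have hcard (v : Fin n) : (G.eNhd {v} j).ncard ≤ n := by
    have : ((G.eNhd {v} j).ncard : ℝ) ≤ n := (hG.ncard_eNhd_le hj hd v).trans (by linarith)
    exact_mod_cast this
  obtain ⟨c, hc⟩ := exists_hallCondition (m := ⌈12 * M⌉₊) hn hcard fun v B hB =>
    hG.log_le_or_ncard_eNhd_le (by lia) (by lia) hξ0 hξ1 hj hd hβ
      (by rwa [← inv_mul_le_iff₀ (by positivity), inv_div])
      (by rwa [← inv_mul_le_iff₀ (by positivity), inv_div]) (Nat.le_ceil _) v fun e he => (hB he).1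
  calc (G.copNumber : ℝ) ≤ ⌈12 * M⌉₊ := by
        exact_mod_cast copNumber_le_of_forall_copsWin fun v =>
          (hc v).copsWin hj (hG.exists_mem_edges hd1 hξn v)
    _ ≤ 13 * M := by linarith [Nat.ceil_lt_add_one (by positivity : 0 ≤ 12 * M)]

end IsExpanding

end KGraph

theorem cop_number_expanding_regime_c_general (n k : ℕ) (hk : 2 ≤ k) (ξ : ℝ) (hξ0 : 0 < ξ)
    (hξ1 : ξ ≤ 1) (G : KGraph n k) (hG : G.IsExpanding ξ) (j : ℕ) (hj : 1 ≤ j)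
    (hd2 : G.avgDeg ≤ ((n : ℝ) * k) ^ ((1 : ℝ) / (2 * (j : ℝ)))) :
    (G.copNumber : ℝ) ≤ 20 * ξ⁻¹ ^ 2 * (G.avgDeg ^ j / k) *
      ((max ⌈(n : ℝ) / G.avgDeg ^ (2 * j) * Real.log n⌉
            ⌈(k : ℝ) / G.avgDeg ^ j * Real.log n⌉ : ℤ) : ℝ) := by
  have hn := hG.two_le_card_vertices hk
  have hd0 : 0 < G.avgDeg := (Nat.cast_pos.2 (by lia)).trans_le hG.1
  have hd : G.avgDeg ^ j ≤ √(n * k) :=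
    pow_le_sqrt_of_le_rpow hd0.le (by positivity) (by lia) hd2
  set βn := (n : ℝ) / G.avgDeg ^ (2 * j) * Real.log n
  set βk := (k : ℝ) / G.avgDeg ^ j * Real.log n
  have hlog : 0 < Real.log n := Real.log_pos (by exact_mod_cast hn)
  have hβ : (1 : ℝ) ≤ (max ⌈βn⌉ ⌈βk⌉ : ℤ) := by
    have : 0 < βn := by positivity
    exact_mod_cast (Int.one_le_ceil_iff.2 this).trans (le_max_left _ _)
  have hβn : βn ≤ (max ⌈βn⌉ ⌈βk⌉ : ℤ) := Int.ceil_le.1 (le_max_left _ _)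
  have hβk : βk ≤ (max ⌈βn⌉ ⌈βk⌉ : ℤ) := Int.ceil_le.1 (le_max_right _ _)
  refine (hG.copNumber_le hk hξ0 hξ1 hj hd hβ hβn hβk).trans ?_
  rw [mul_assoc 20, mul_assoc 20]
  gcongr
  norm_num

/-- regime (c). -/
theorem cop_number_expanding_regime_c (n k : ℕ) (hk : 2 ≤ k) (ξ : ℝ) (hξ0 : 0 < ξ) (hξ1 : ξ ≤ 1)
    (G : KGraph n k) (hG : G.IsExpanding ξ) (j : ℕ) (hj : 1 ≤ j)
    (hd1 : (n : ℝ) ^ ((1 : ℝ) / (2 * (j : ℝ))) ≤ G.avgDeg)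
    (hd2 : G.avgDeg ≤ ((n : ℝ) * k) ^ ((1 : ℝ) / (2 * (j : ℝ)))) :
    (G.copNumber : ℝ) ≤ 20 * ξ⁻¹ ^ 2 * (G.avgDeg ^ j / k) *
      ((max ⌈(n : ℝ) / G.avgDeg ^ (2 * j) * Real.log n⌉
            ⌈(k : ℝ) / G.avgDeg ^ j * Real.log n⌉ : ℤ) : ℝ) :=
  cop_number_expanding_regime_c_general n k hk ξ hξ0 hξ1 G hG j hj hd2
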